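/- Let K ⊆ ℝ^n be a nonempty compact set, μ a finite Borel measure whose support is exactly K, and f, g real polynomials with g(x) > 0 on K; set ρ := min_{x∈K} f(x)/g(x). For each d ∈ ℕ the set S_d := {a ∈ ℝ : M_d(f μ) − a·M_d(g μ) is positive semidefinite} is nonempty and bounded above; its supremum a_d satisfies a_d ≥ ρ; the sequence (a_d)_{d∈ℕ} is nonincreasing; and a_d → ρ as d → ∞. -/

import Mathlib

/-!
The quadratic form of `locMat n d μ f - a • locMat n d μ g` at a vector `v` is
`∫ (f - a g) p_v² dμ`, where `p_v = ∑ v_α x^α`, and as `d` and `v` vary the `p_v` run through all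
polynomials (`exists_rowPoly_eq`). Hence `S d` is the set of `a` with `∫ (f - a g) p² dμ ≥ 0` for all
`p` of coordinate degree at most `d` (`posSemidef_iff`).

* `ρ ∈ S d`, since `f - ρ g ≥ 0` on `K`; testing against `p = 1` gives `a ∫ g dμ ≤ ∫ f dμ` for all
  `a ∈ S d`, and `∫ g dμ > 0`.
* `S e ⊆ S d` for `d ≤ e`, because the degree-`d` matrix is a principal submatrix of the degree-`e` one.
* If `a > ρ` then `h = f - a g` is negative somewhere on `K`. With `φ = √(max (-h) 0)` one has
  `∫ h φ² dμ = -∫ (max (-h) 0)² dμ < 0`, and by Stone–Weierstrass `φ` may be replaced by a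
  polynomial `p` (`exists_integral_neg`). As `∫ g p² dμ ≥ 0`, no `b ≥ a` lies in `S d` once `d` is
  large enough to accommodate `p`, so `sSup (S d) ≤ a`.
-/

open MeasureTheory MvPolynomial

/-- The degree-`d` localizing matrix of a polynomial `h` with respect to a measure `μ` on
`ℝ^n`: rows and columns are indexed by multi-indices `α` with `αᵢ ≤ d` for all `i` (encoded
as `α : Fin n → Fin (d+1)`), and the `(α, β)` entry is `∫ h(x) x^{α+β} dμ(x)`. -/
noncomputable def locMat (n d : ℕ) (μ : Measure (Fin n → ℝ)) (h : MvPolynomial (Fin n) ℝ) :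
    Matrix (Fin n → Fin (d + 1)) (Fin n → Fin (d + 1)) ℝ :=
  Matrix.of fun α β => ∫ x, eval x h * ∏ i, x i ^ ((α i : ℕ) + (β i : ℕ)) ∂μ

/-- The polynomial function `x ↦ ∑ v_α x^α` whose coefficient vector is `v`. -/
noncomputable def rowPoly {n d : ℕ} (v : (Fin n → Fin (d + 1)) → ℝ) (x : Fin n → ℝ) : ℝ :=
  ∑ α, v α * ∏ i, x i ^ (α i : ℕ)

lemma continuous_rowPoly {n d : ℕ} (v : (Fin n → Fin (d + 1)) → ℝ) :
    Continuous (rowPoly v) := by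
  unfold rowPoly
  fun_prop

lemma exists_rowPoly_eq {n : ℕ} (p : MvPolynomial (Fin n) ℝ) :
    ∃ (d : ℕ) (v : (Fin n → Fin (d + 1)) → ℝ), ∀ x, rowPoly v x = eval x p := by
  refine ⟨p.totalDegree,
    fun α => p.coeff (Finsupp.equivFunOnFinite.symm fun i => (α i : ℕ)), fun x => ?_⟩
  rw [eval_eq', rowPoly]
  symm
  have hdeg : ∀ m ∈ p.support, ∀ i, m i < p.totalDegree + 1 := by
    intro m hm i
    have h1 := MvPolynomial.le_totalDegree hm
    have h2 : m i ≤ m.sum fun _ e => e := by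
      by_cases hi : i ∈ m.support
      · exact Finset.single_le_sum (f := fun j => m j) (fun _ _ => Nat.zero_le _) hi
      · simp [Finsupp.notMem_support_iff.mp hi]
    omega
  refine Finset.sum_bij_ne_zero (fun m hm _ i => ⟨m i, hdeg m hm i⟩) ?_ ?_ ?_ ?_
  · intros
    exact Finset.mem_univ _
  · intro a ha _ b hb _ hab
    ext i
    simpa using congrFun hab i
  · intro α _ hα
    refine ⟨Finsupp.equivFunOnFinite.symm fun i => (α i : ℕ), ?_, ?_, ?_⟩
    · rw [mem_support_iff]
      exact left_ne_zero_of_mul hα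
    · simpa using hα
    · ext i
      simp
  · intro m hm _
    congr 2
    ext i
    simp

section Measure

variable {n : ℕ} {K : Set (Fin n → ℝ)} {μ : Measure (Fin n → ℝ)}

lemma ae_mem_of_compl_null (hsupp : μ Kᶜ = 0) : ∀ᵐ x ∂μ, x ∈ K := by
  rwa [ae_iff]

lemma integrable_of_continuous [IsFiniteMeasure μ] (hK : IsCompact K) (hsupp : μ Kᶜ = 0)
    {F : (Fin n → ℝ) → ℝ} (hF : Continuous F) : Integrable F μ := by
  rw [← Measure.restrict_eq_self_of_ae_mem (ae_mem_of_compl_null hsupp)]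
  exact hF.continuousOn.integrableOn_compact hK

lemma continuous_eval_fun (h : MvPolynomial (Fin n) ℝ) : Continuous fun x => eval x h :=
  MvPolynomial.continuous_eval h

/-- The quadratic form of the localizing matrix of `h` integrates `h` against squares. -/
lemma dotProduct_locMat [IsFiniteMeasure μ] (hK : IsCompact K) (hsupp : μ Kᶜ = 0)
    (h : MvPolynomial (Fin n) ℝ) {d : ℕ} (v : (Fin n → Fin (d + 1)) → ℝ) :
    v ⬝ᵥ (locMat n d μ h).mulVec v = ∫ x, eval x h * rowPoly v x ^ 2 ∂μ := by
  have hc := continuous_eval_fun h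
  have key : ∀ x, eval x h * rowPoly v x ^ 2 =
      ∑ α, ∑ β, v α * ((eval x h * ∏ i, x i ^ ((α i : ℕ) + (β i : ℕ))) * v β) := by
    intro x
    rw [rowPoly, pow_two, Finset.sum_mul_sum, Finset.mul_sum]
    refine Finset.sum_congr rfl fun α _ => ?_
    rw [Finset.mul_sum]
    refine Finset.sum_congr rfl fun β _ => ?_
    simp only [pow_add, Finset.prod_mul_distrib]
    ring
  have hint : ∀ α β : Fin n → Fin (d + 1), Integrable
      (fun x => v α * ((eval x h * ∏ i, x i ^ ((α i : ℕ) + (β i : ℕ))) * v β)) μ :=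
    fun α β => integrable_of_continuous hK hsupp (by fun_prop)
  simp_rw [key]
  rw [integral_finsetSum _ fun α _ => integrable_finsetSum _ fun β _ => hint α β]
  simp only [dotProduct, Matrix.mulVec, Finset.mul_sum]
  refine Finset.sum_congr rfl fun α _ => ?_
  rw [integral_finsetSum _ fun β _ => hint α β]
  refine Finset.sum_congr rfl fun β _ => ?_
  rw [integral_const_mul, integral_mul_const]
  rfl

lemma locMat_isHermitian (d : ℕ) (h : MvPolynomial (Fin n) ℝ) :
    (locMat n d μ h).IsHermitian := by
  ext α β
  simp [locMat, add_comm]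

lemma posSemidef_iff [IsFiniteMeasure μ] (hK : IsCompact K) (hsupp : μ Kᶜ = 0)
    (f g : MvPolynomial (Fin n) ℝ) (d : ℕ) (a : ℝ) :
    (locMat n d μ f - a • locMat n d μ g).PosSemidef ↔
      ∀ v : (Fin n → Fin (d + 1)) → ℝ, 0 ≤ ∫ x, (eval x f - a * eval x g) * rowPoly v x ^ 2 ∂μ := by
  have hf := continuous_eval_fun f
  have hg := continuous_eval_fun g
  have key : ∀ v : (Fin n → Fin (d + 1)) → ℝ,
      star v ⬝ᵥ (locMat n d μ f - a • locMat n d μ g).mulVec v =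
        ∫ x, (eval x f - a * eval x g) * rowPoly v x ^ 2 ∂μ := by
    intro v
    have hv := continuous_rowPoly v
    rw [star_trivial, Matrix.sub_mulVec, Matrix.smul_mulVec, dotProduct_sub, dotProduct_smul,
      dotProduct_locMat hK hsupp, dotProduct_locMat hK hsupp, smul_eq_mul, ← integral_const_mul,
      ← integral_sub (integrable_of_continuous hK hsupp (by fun_prop))
        (integrable_of_continuous hK hsupp (by fun_prop))]
    congr 1
    ext x
    ring
  have hH : (locMat n d μ f - a • locMat n d μ g).IsHermitian :=
    (locMat_isHermitian d f).sub ((locMat_isHermitian d g).smul (IsSelfAdjoint.all a))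
  rw [Matrix.posSemidef_iff_dotProduct_mulVec]
  simp_rw [key]
  exact and_iff_right hH

/-- If a polynomial `h` is negative somewhere on the support `K` of `μ`, then some square of a
polynomial detects it. -/
lemma exists_integral_neg [IsFiniteMeasure μ] (hK : IsCompact K) (hsupp : μ Kᶜ = 0)
    (hpos : ∀ U : Set (Fin n → ℝ), IsOpen U → (U ∩ K).Nonempty → 0 < μ U)
    (h : MvPolynomial (Fin n) ℝ) {x₀ : Fin n → ℝ} (hx₀ : x₀ ∈ K) (hneg : eval x₀ h < 0) :
    ∃ p : MvPolynomial (Fin n) ℝ, ∫ x, eval x h * eval x p ^ 2 ∂μ < 0 := by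
  have hc := continuous_eval_fun h
  let φ : C(Fin n → ℝ, ℝ) := ⟨fun x => √(max (-eval x h) 0), by fun_prop⟩
  have hφ : ∀ x, eval x h * φ x ^ 2 = -(max (-eval x h) 0) ^ 2 := by
    intro x
    have : φ x ^ 2 = max (-eval x h) 0 := Real.sq_sqrt (le_max_right _ _)
    rw [this]
    rcases le_total (-eval x h) 0 with h0 | h0
    · simp [max_eq_right h0]
    · rw [max_eq_left h0]
      ring
  have hlim_neg : ∫ x, eval x h * φ x ^ 2 ∂μ < 0 := by
    simp_rw [hφ]
    rw [integral_neg, neg_lt_zero, integral_pos_iff_support_of_nonneg_ae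
      (Filter.Eventually.of_forall fun x => sq_nonneg _)
      (integrable_of_continuous hK hsupp (by fun_prop))]
    refine (hpos {x | eval x h < 0} (isOpen_lt hc continuous_const) ⟨x₀, hneg, hx₀⟩).trans_le
      (measure_mono fun x hx => ?_)
    have hx' : eval x h < 0 := hx
    have : 0 < max (-eval x h) 0 := lt_max_of_lt_left (by linarith)
    exact ne_of_gt (pow_pos this 2)
  -- The polynomial functions, as a point-separating subalgebra of `C(ℝⁿ, ℝ)`.
  let T : MvPolynomial (Fin n) ℝ →ₐ[ℝ] C(Fin n → ℝ, ℝ) :=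
    aeval fun i => ⟨fun x => x i, continuous_apply i⟩
  have hT : ∀ p x, T p x = eval x p := by
    intro p x
    induction p using MvPolynomial.induction_on with
    | C a => simp [T]
    | add p q hp hq => simp [hp, hq]
    | mul_X p i hp => simp [hp, T]
  have hsep : T.range.SeparatesPoints := by
    intro x y hxy
    obtain ⟨i, hi⟩ := Function.ne_iff.mp hxy
    exact ⟨T (X i), ⟨T (X i), ⟨X i, rfl⟩, rfl⟩, by simpa [hT] using hi⟩
  have happrox : ∀ k : ℕ, ∃ p : MvPolynomial (Fin n) ℝ,
      ∀ x ∈ K, |eval x p - φ x| < 1 / ((k : ℝ) + 1) := by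
    intro k
    obtain ⟨q, ⟨p, rfl⟩, hq⟩ :=
      ContinuousMap.exists_mem_subalgebra_near_continuous_of_isCompact_of_separatesPoints
        hsep φ hK (Nat.one_div_pos_of_nat (α := ℝ) (n := k))
    exact ⟨p, fun x hx => by simpa [hT] using hq x hx⟩
  choose P hP using happrox
  have hlim : Filter.Tendsto (fun k => ∫ x, eval x h * eval x (P k) ^ 2 ∂μ) Filter.atTop
      (nhds (∫ x, eval x h * φ x ^ 2 ∂μ)) := by
    refine tendsto_integral_of_dominated_convergence
      (fun x => |eval x h| * (|φ x| + 1) ^ 2) (fun k => ?_)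
      (integrable_of_continuous hK hsupp (by fun_prop)) (fun k => ?_) ?_
    · have := continuous_eval_fun (P k)
      exact (integrable_of_continuous hK hsupp (by fun_prop)).aestronglyMeasurable
    · filter_upwards [ae_mem_of_compl_null hsupp] with x hx
      rw [norm_mul, norm_pow, Real.norm_eq_abs, Real.norm_eq_abs]
      have h1 := hP k x hx
      have h2 : 1 / ((k : ℝ) + 1) ≤ 1 := by
        rw [div_le_one (by positivity)]
        simp
      have h3 := abs_sub_abs_le_abs_sub (eval x (P k)) (φ x)
      gcongr
      linarith
    · filter_upwards [ae_mem_of_compl_null hsupp] with x hx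
      have hx' : Filter.Tendsto (fun k => eval x (P k)) Filter.atTop (nhds (φ x)) := by
        rw [tendsto_iff_norm_sub_tendsto_zero]
        exact squeeze_zero (fun _ => norm_nonneg _) (fun k => (hP k x hx).le)
          tendsto_one_div_add_atTop_nhds_zero_nat
      exact (hx'.pow 2).const_mul _
  obtain ⟨k, hk⟩ := (hlim.eventually_lt_const hlim_neg).exists
  exact ⟨P k, hk⟩

end Measure

/-- Let `K ⊆ ℝ^n` be nonempty compact, `μ` a finite Borel measure with
support exactly `K`, and `f, g` polynomials with `g > 0` on `K`; set
`ρ := min_K f/g`. For each `d` the set `S_d = {a : M_d(f μ) − a M_d(g μ) ⪰ 0}` is nonempty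
and bounded above, its supremum `a_d` satisfies `a_d ≥ ρ`, the sequence `(a_d)` is
nonincreasing, and `a_d → ρ`. -/
theorem stmt_5 (n : ℕ) (K : Set (Fin n → ℝ)) (hK : IsCompact K) (hKne : K.Nonempty)
    (μ : Measure (Fin n → ℝ)) [IsFiniteMeasure μ]
    (hsupp : μ Kᶜ = 0)
    (hpos : ∀ U : Set (Fin n → ℝ), IsOpen U → (U ∩ K).Nonempty → 0 < μ U)
    (f g : MvPolynomial (Fin n) ℝ) (hg : ∀ x ∈ K, 0 < eval x g)
    (ρ : ℝ) (hρ : IsLeast ((fun x => eval x f / eval x g) '' K) ρ)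
    (S : ℕ → Set ℝ)
    (hS : S = fun d => {a : ℝ | (locMat n d μ f - a • locMat n d μ g).PosSemidef}) :
    (∀ d, (S d).Nonempty ∧ BddAbove (S d)) ∧
    (∀ d, ρ ≤ sSup (S d)) ∧
    (Antitone fun d => sSup (S d)) ∧
    Filter.Tendsto (fun d => sSup (S d)) Filter.atTop (nhds ρ) := by
  have mem_S : ∀ d a, a ∈ S d ↔ ∀ v : (Fin n → Fin (d + 1)) → ℝ,
      0 ≤ ∫ x, (eval x f - a * eval x g) * rowPoly v x ^ 2 ∂μ := by
    intro d a
    rw [hS]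
    exact posSemidef_iff hK hsupp f g d a
  have hfc := continuous_eval_fun f
  have hgc := continuous_eval_fun g
  have hKae := ae_mem_of_compl_null hsupp
  have hρS : ∀ d, ρ ∈ S d := by
    intro d
    rw [mem_S]
    intro v
    refine integral_nonneg_of_ae ?_
    filter_upwards [hKae] with x hx
    have h1 : ρ ≤ eval x f / eval x g := hρ.2 ⟨x, hx, rfl⟩
    rw [le_div_iff₀ (hg x hx)] at h1
    exact mul_nonneg (by linarith) (sq_nonneg _)
  have hgpos : 0 < ∫ x, eval x g ∂μ := by
    rw [integral_pos_iff_support_of_nonneg_ae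
      (by filter_upwards [hKae] with x hx using (hg x hx).le)
      (integrable_of_continuous hK hsupp hgc)]
    obtain ⟨x, hx⟩ := hKne
    refine (hpos {x | 0 < eval x g} (isOpen_lt continuous_const hgc) ⟨x, hg x hx, hx⟩).trans_le
      (measure_mono fun y hy => ne_of_gt hy)
  have hbdd : ∀ d, BddAbove (S d) := by
    intro d
    refine ⟨(∫ x, eval x f ∂μ) / ∫ x, eval x g ∂μ, fun a ha => ?_⟩
    -- The coefficient vector of the constant polynomial `1`.
    have h1 := (mem_S d a).1 ha (Pi.single 0 1)
    have h2 : ∀ x, rowPoly (Pi.single (0 : Fin n → Fin (d + 1)) (1 : ℝ)) x = 1 := by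
      intro x
      rw [rowPoly, Finset.sum_eq_single 0]
      · simp
      · intro b _ hb
        simp [hb]
      · simp
    simp only [h2, one_pow, mul_one] at h1
    rw [integral_sub (integrable_of_continuous hK hsupp hfc)
      (integrable_of_continuous hK hsupp (by fun_prop)), integral_const_mul] at h1
    rw [le_div_iff₀ hgpos]
    linarith
  have hle : ∀ d, ρ ≤ sSup (S d) := fun d => le_csSup (hbdd d) (hρS d)
  have hanti : Antitone fun d => sSup (S d) := by
    intro d e hde
    refine csSup_le_csSup (hbdd d) ⟨ρ, hρS e⟩ fun a ha => ?_
    rw [hS] at ha ⊢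
    exact Matrix.PosSemidef.submatrix ha
      fun (α : Fin n → Fin (d + 1)) i => Fin.castLE (by omega) (α i)
  refine ⟨fun d => ⟨⟨ρ, hρS d⟩, hbdd d⟩, hle, hanti, ?_⟩
  have hcross : ∀ a, ρ < a → ∃ d, sSup (S d) ≤ a := by
    intro a ha
    obtain ⟨x₀, hx₀, hx₀ρ⟩ := hρ.1
    have hneg : eval x₀ (f - C a * g) < 0 := by
      have : eval x₀ f / eval x₀ g < a := by
        rw [← hx₀ρ] at ha
        exact ha
      rw [div_lt_iff₀ (hg x₀ hx₀)] at this
      simpa using this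
    obtain ⟨p, hp⟩ := exists_integral_neg hK hsupp hpos _ hx₀ hneg
    obtain ⟨d, v, hv⟩ := exists_rowPoly_eq p
    have hpc := continuous_eval_fun p
    refine ⟨d, csSup_le ⟨ρ, hρS d⟩ fun b hb => ?_⟩
    by_contra! hab
    have h1 := (mem_S d b).1 hb v
    simp only [hv] at h1
    refine absurd hp (not_lt.mpr (h1.trans (integral_mono_ae
      (integrable_of_continuous hK hsupp (by fun_prop))
      (integrable_of_continuous hK hsupp
        ((continuous_eval_fun (f - C a * g)).mul (hpc.pow 2))) ?_)))
    filter_upwards [hKae] with x hx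
    have hgx := hg x hx
    simp only [map_sub, map_mul, eval_C]
    gcongr
  refine tendsto_order.2 ⟨fun b hb => Filter.Eventually.of_forall fun d => hb.trans_le (hle d),
    fun b hb => ?_⟩
  obtain ⟨a, ha, hab⟩ := exists_between hb
  obtain ⟨d, hd⟩ := hcross a ha
  filter_upwards [Filter.eventually_ge_atTop d] with e he
  exact ((hanti he).trans hd).trans_lt hab
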